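/- arXiv:2307.15211 — 6 statements merged into one kernel-verified Lean document; each statement's English description precedes it below -/
import Mathlib

section
/- Let D_1, D_2, D_3, D_4 be the four chord diagrams of order n obtained from a common configuration as described (with x inserted immediately before p, immediately after p, immediately before q, and immediately after q, respectively). Then the partial-dual genus polynomials satisfy the four-term relation: ∂Γ_{D_1}(z) − ∂Γ_{D_2}(z) + ∂Γ_{D_3}(z) − ∂Γ_{D_4}(z) = 0 as polynomials in z. Equivalently, the partial-dual genus polynomial, regarded as a polynomial-valued function on chord diagrams, is a weight system. -/
/-- Number of cycles (orbits, counting fixed points) of a self-map: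
the number of connected components of its functional graph. For a permutation
this is the number of cycles, counting fixed points. -/
noncomputable def cycles {α : Type*} (f : α → α) : ℕ :=
  Nat.card (Quot fun i j => f i = j)

-- `restrictTo σ A` agrees with `σ` on `A` and fixes everything else.
-- If `A` is the set of endpoints of a set of chords of `σ`, this is `σ_A`.
open Classical in
noncomputable def restrictTo {α : Type*} (f : α → α) (A : Set α) : α → α :=
  fun i => if i ∈ A then f i else i

/-- The rotation `i ↦ i + 1` of the `2n` points of a chord diagram. -/
def rot (n : ℕ) : ZMod (2 * n) → ZMod (2 * n) := fun i => i + 1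

/-- Genus of the partial dual of the chord diagram `σ` relative to the set of
chords whose endpoint set is the (`σ`-invariant) set `A`. -/
noncomputable def pdGenus (n : ℕ) (σ : ZMod (2 * n) → ZMod (2 * n))
    (A : Set (ZMod (2 * n))) : ℕ :=
  (n + 2 - cycles (rot n ∘ restrictTo σ A) - cycles (rot n ∘ restrictTo σ Aᶜ)) / 2

/-- Genus of the one-vertex ribbon graph of the chord diagram `σ`. -/
noncomputable def genus (n : ℕ) (σ : ZMod (2 * n) → ZMod (2 * n)) : ℕ :=
  (n + 1 - cycles (rot n ∘ σ)) / 2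

/-- The partial-dual genus polynomial `∂Γ_σ(z) = Σ_A z^{g_A(σ)}`, the sum being
over all sets `A` of chords of `σ` (encoded as `σ`-invariant subsets of the
`2n` points). -/
noncomputable def pdPoly (n : ℕ) (σ : ZMod (2 * n) → ZMod (2 * n)) : Polynomial ℤ :=
  if h : n = 0 then 1 else
    haveI : NeZero (2 * n) := ⟨by omega⟩
    ∑ A ∈ Finset.univ.filter (fun A : Finset (ZMod (2 * n)) => ∀ i ∈ A, σ i ∈ A),
      Polynomial.X ^ pdGenus n σ (↑A : Set (ZMod (2 * n)))

/-- `φ : ZMod (2n-1) → ZMod (2n)` is the cyclic-order-preserving identification of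
the `2n-1` configuration points with the complement of the inserted point `x`:
it avoids `x` and each step advances by one position on the circle, skipping `x`. -/
def IsInsertion {m N : ℕ} (φ : ZMod m → ZMod N) (x : ZMod N) : Prop :=
  φ 0 ≠ x ∧ ∀ j, φ (j + 1) = if φ j + 1 = x then φ j + 2 else φ j + 1

/-- A configuration of `2n-1` marked points on the circle: a distinguished chord
`c = {p, q}`, a distinguished unpaired point `u`, and a fixed-point-free pairing
of the remaining `2n-4` points into background chords; all encoded by the
involution `τ` whose unique fixed point is `u` and with `τ p = q`. -/
def IsConfig (n : ℕ) (τ : ZMod (2 * n - 1) → ZMod (2 * n - 1))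
    (p q u : ZMod (2 * n - 1)) : Prop :=
  Function.Involutive τ ∧ τ p = q ∧ p ≠ q ∧ τ u = u ∧ ∀ j, τ j = j → j = u

/-- `D` is the chord diagram of order `n` obtained from the configuration `τ`
by inserting the extra point `x` (via the order-preserving identification `φ`)
together with the new chord `c' = {x, u}`; all other chords are unchanged. -/
def IsInsertedDiagram (n : ℕ) (τ : ZMod (2 * n - 1) → ZMod (2 * n - 1))
    (u : ZMod (2 * n - 1)) (φ : ZMod (2 * n - 1) → ZMod (2 * n)) (x : ZMod (2 * n))
    (D : ZMod (2 * n) → ZMod (2 * n)) : Prop :=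
  IsInsertion φ x ∧ (∀ j, j ≠ u → D (φ j) = φ (τ j)) ∧ D (φ u) = x ∧ D x = φ u

theorem cycles_conj {α β : Type*} (e : α ≃ β) (f : α → α) (g : β → β)
    (h : ∀ a, e (f a) = g (e a)) : cycles f = cycles g := by
  unfold cycles
  refine Nat.card_congr (Quot.congr e ?_)
  intro a b
  rw [← h, e.apply_eq_iff_eq]

open Classical in
theorem splice_sound {α : Type*} (f g : α → α) (y : α) (hf : f y ≠ y)
    (h : ∀ j, j ≠ y → (if f j = y then f y else f j) = (if g j = y then g y else g j))
    (i j : α) (hij : f i = j) :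
    (if i = y then Quot.mk (fun i j => g i = j) (f y) else Quot.mk _ i) =
    (if j = y then Quot.mk (fun i j => g i = j) (f y) else Quot.mk _ j) := by
  have key : ∀ i, i ≠ y → Quot.mk (fun i j => g i = j) i =
      Quot.mk (fun i j => g i = j) (if f i = y then f y else f i) := by
    intro i hi
    rw [h i hi]
    have h1 : Quot.mk (fun i j => g i = j) i = Quot.mk (fun i j => g i = j) (g i) :=
      Quot.sound rfl
    split_ifs with h2
    · rw [h1, h2]
      exact Quot.sound rfl
    · exact h1
  subst hij
  by_cases hi : i = y
  · subst hi
    simp [hf]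
  · have := key i hi
    rw [if_neg hi, this]
    split_ifs <;> rfl

open Classical in
/-- Moving a single point `y` of the functional graph does not change the number of cycles. -/
theorem cycles_splice {α : Type*} (f g : α → α) (y : α) (hf : f y ≠ y) (hg : g y ≠ y)
    (h : ∀ j, j ≠ y → (if f j = y then f y else f j) = (if g j = y then g y else g j)) :
    cycles f = cycles g := by
  unfold cycles
  have h' := fun j hj => (h j hj).symm
  refine Nat.card_congr ⟨Quot.lift _ (splice_sound f g y hf h),
    Quot.lift _ (splice_sound g f y hg h'), ?_, ?_⟩
  · rintro ⟨j⟩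
    by_cases hj : j = y
    · subst hj
      simp only [if_true, hf, if_false]
      exact (Quot.sound (r := fun i j => f i = j) rfl).symm
    · simp [hj]
  · rintro ⟨j⟩
    by_cases hj : j = y
    · subst hj
      simp only [if_true, hg, if_false]
      exact (Quot.sound (r := fun i j => g i = j) rfl).symm
    · simp [hj]

/-- Rotation on the `m` points with an extra point `none` inserted just before `a`. -/
def optRot {m : ℕ} (a : ZMod m) : Option (ZMod m) → Option (ZMod m)
  | none => some a
  | some j => if j + 1 = a then none else some (j + 1)

/-- The involution pairing `none` with `u`. -/
def optInv {m : ℕ} (τ : ZMod m → ZMod m) (u : ZMod m) : Option (ZMod m) → Option (ZMod m)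
  | none => some u
  | some j => if j = u then none else some (τ j)

theorem optInv_invol {m : ℕ} (τ : ZMod m → ZMod m) (u : ZMod m)
    (hi : Function.Involutive τ) (hu : τ u = u) : Function.Involutive (optInv τ u) := by
  rintro (_ | j)
  · simp [optInv]
  · by_cases h : j = u
    · simp [optInv, h]
    · have : τ j ≠ u := fun h' => h (by rw [← hi j, h', hu])
      simp [optInv, h, this, hi j]

theorem restrictTo_invol {α : Type*} (f : α → α) (hf : Function.Involutive f) (A : Set α)
    (hA : ∀ i ∈ A, f i ∈ A) : Function.Involutive (restrictTo f A) := by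
  intro i
  by_cases h : i ∈ A
  · simp [restrictTo, h, hA i h, hf i]
  · simp [restrictTo, h]

theorem cycles_none {m : ℕ} (T : Option (ZMod m) → Option (ZMod m)) (hT : Function.Involutive T)
    (h0 : T none = none) (a b : ZMod m) : cycles (optRot a ∘ T) = cycles (optRot b ∘ T) := by
  refine cycles_splice _ _ none (by simp [h0, optRot]) (by simp [h0, optRot]) ?_
  rintro (_ | j) hj
  · exact absurd rfl hj
  · obtain ⟨k, hk⟩ : ∃ k, T (some j) = some k := by
      cases hk : T (some j) with
      | none => rw [← h0] at hk; exact absurd (hT.injective hk) hj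
      | some k => exact ⟨k, rfl⟩
    simp only [Function.comp, hk, h0, optRot]
    by_cases ha : k + 1 = a <;> by_cases hb : k + 1 = b <;> simp [ha, hb] <;> simp_all

theorem cycles_slide {m : ℕ}
    (T : Option (ZMod m) → Option (ZMod m)) (hT : Function.Involutive T)
    (p q : ZMod m) (hpq : T (some p) = some q) :
    cycles (optRot p ∘ T) = cycles (optRot (q + 1) ∘ T) := by
  have hf : optRot p (some q) ≠ some p := by
    simp only [optRot]; split_ifs with h <;> simp [h]
  refine cycles_splice _ _ (some p) (by simpa [hpq] using hf) (by simp [hpq, optRot]) ?_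
  intro j hj
  have hk : T j ≠ some q := fun h => hj (hT.injective (h.trans hpq.symm))
  simp only [Function.comp, hpq]
  generalize T j = k at hk
  rcases k with _ | k
  · simp only [optRot]
    by_cases h : q + 1 = p <;> simp [h]
  · have hk' : k ≠ q := fun h => hk (by rw [h])
    simp only [optRot]
    by_cases h : k + 1 = p <;> simp [h, hk']

/-- genus exponent on the common model -/
noncomputable def optGenus (n : ℕ) {m : ℕ} (T : Option (ZMod m) → Option (ZMod m)) (a : ZMod m)
    (A : Set (Option (ZMod m))) : ℕ :=
  (n + 2 - cycles (optRot a ∘ restrictTo T A) - cycles (optRot a ∘ restrictTo T Aᶜ)) / 2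

theorem restrictTo_conj {α β : Type*} (e : α ≃ β) (f : α → α) (g : β → β)
    (h : ∀ a, e (f a) = g (e a)) (A : Set α) (B : Set β) (hAB : ∀ a, a ∈ A ↔ e a ∈ B) (a : α) :
    e (restrictTo f A a) = restrictTo g B (e a) := by
  by_cases ha : a ∈ A
  · simp [restrictTo, ha, (hAB a).1 ha, h]
  · have : e a ∉ B := fun h => ha ((hAB a).2 h)
    simp [restrictTo, ha, this]

theorem exists_model (n : ℕ) (hn : 2 ≤ n)
    (τ : ZMod (2 * n - 1) → ZMod (2 * n - 1)) (u a : ZMod (2 * n - 1))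
    (φ : ZMod (2 * n - 1) → ZMod (2 * n)) (x : ZMod (2 * n)) (D : ZMod (2 * n) → ZMod (2 * n))
    (h : IsInsertedDiagram n τ u φ x D) (ha : φ a = x + 1) :
    ∃ e : Option (ZMod (2 * n - 1)) ≃ ZMod (2 * n),
      (∀ o, e (optRot a o) = rot n (e o)) ∧ (∀ o, e (optInv τ u o) = D (e o)) := by
  obtain ⟨⟨-, hφ⟩, hD, hDu, hDx⟩ := h
  haveI : NeZero (2 * n) := ⟨by omega⟩
  haveI : NeZero (2 * n - 1) := ⟨by omega⟩
  let e0 : Option (ZMod (2 * n - 1)) → ZMod (2 * n) := fun o => o.elim x φ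
  have hclosed : ∀ y, y ∈ Set.range e0 → y + 1 ∈ Set.range e0 := by
    rintro _ ⟨o, rfl⟩
    rcases o with _ | j
    · exact ⟨some a, ha⟩
    · by_cases hx : φ j + 1 = x
      · exact ⟨none, hx.symm⟩
      · exact ⟨some (j + 1), by simpa [e0, hx] using hφ j⟩
  have hcl : ∀ k : ℕ, x + (k : ZMod (2 * n)) ∈ Set.range e0 := by
    intro k
    induction k with
    | zero => exact ⟨none, by simp [e0]⟩
    | succ k ih => simpa [add_assoc] using hclosed _ ih
  have hsurj : Function.Surjective e0 := by
    intro y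
    have := hcl (y - x).val
    rwa [ZMod.natCast_zmod_val, add_sub_cancel] at this
  have hbij : Function.Bijective e0 := by
    rw [Fintype.bijective_iff_surjective_and_card]
    refine ⟨hsurj, ?_⟩
    rw [Fintype.card_option, ZMod.card, ZMod.card]
    omega
  have hinj : Function.Injective φ := fun i j hij =>
    Option.some_injective _ (hbij.1 (show e0 (some i) = e0 (some j) from hij))
  have hne : ∀ j, φ j ≠ x := fun j hj => by
    have : some j = none := hbij.1 (show e0 (some j) = e0 none from hj)
    cases this
  refine ⟨Equiv.ofBijective e0 hbij, ?_, ?_⟩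
  · rintro (_ | j)
    · exact ha
    · show e0 (optRot a (some j)) = φ j + 1
      have hj := hφ j
      simp only [optRot]
      by_cases h1 : j + 1 = a
      · rw [if_pos h1]
        by_contra h2
        rw [if_neg (fun h => h2 h.symm), h1, ha] at hj
        exact hne j (add_right_cancel hj).symm
      · rw [if_neg h1]
        by_cases h2 : φ j + 1 = x
        · rw [if_pos h2] at hj
          refine absurd (hinj ?_) h1
          rw [hj, ha, ← h2]; ring
        · rw [if_neg h2] at hj
          exact hj
  · rintro (_ | j)
    · exact hDx.symm
    · show e0 (optInv τ u (some j)) = D (φ j)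
      by_cases h1 : j = u
      · subst h1; simp [optInv, e0, hDu]
      · simp [optInv, e0, h1, hD j h1]

theorem pdPoly_model (n : ℕ) (hn : 2 ≤ n) [Fintype (Option (ZMod (2 * n - 1)))]
    [DecidableEq (Option (ZMod (2 * n - 1)))]
    (τ : ZMod (2 * n - 1) → ZMod (2 * n - 1)) (u a : ZMod (2 * n - 1))
    (φ : ZMod (2 * n - 1) → ZMod (2 * n)) (x : ZMod (2 * n)) (D : ZMod (2 * n) → ZMod (2 * n))
    (h : IsInsertedDiagram n τ u φ x D) (ha : φ a = x + 1) :
    pdPoly n D = ∑ A ∈ Finset.univ.filter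
      (fun A : Finset (Option (ZMod (2 * n - 1))) => ∀ i ∈ A, optInv τ u i ∈ A),
      Polynomial.X ^ optGenus n (optInv τ u) a (↑A : Set (Option (ZMod (2 * n - 1)))) := by
  obtain ⟨e, hR, hT⟩ := exists_model n hn τ u a φ x D h ha
  unfold pdPoly
  rw [dif_neg (by omega)]
  symm
  refine Finset.sum_equiv e.finsetCongr ?_ ?_
  · intro A
    simp only [Finset.mem_filter, Finset.mem_univ, true_and, Equiv.finsetCongr_apply,
      Finset.mem_map_equiv]
    rw [← e.forall_congr_right]
    simp [← hT]
  · intro A _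
    congr 1
    unfold optGenus pdGenus
    have hmem : ∀ a, a ∈ (↑A : Set (Option (ZMod (2 * n - 1)))) ↔
        e a ∈ (↑(e.finsetCongr A) : Set (ZMod (2 * n))) := by
      intro a; simp
    rw [cycles_conj e (optRot a ∘ restrictTo (optInv τ u) ↑A)
        (rot n ∘ restrictTo D ↑(e.finsetCongr A)),
      cycles_conj e (optRot a ∘ restrictTo (optInv τ u) (↑A)ᶜ)
        (rot n ∘ restrictTo D (↑(e.finsetCongr A))ᶜ)]
    · intro o
      simp only [Function.comp, hR]
      rw [restrictTo_conj e _ _ hT (↑A)ᶜ (↑(e.finsetCongr A))ᶜ (fun a => not_congr (hmem a))]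
    · intro o
      simp only [Function.comp, hR]
      rw [restrictTo_conj e _ _ hT _ _ hmem]

/-- The partial-dual genus polynomial satisfies the four-term relation:
`∂Γ_{D₁} - ∂Γ_{D₂} + ∂Γ_{D₃} - ∂Γ_{D₄} = 0` for the four chord diagrams obtained
from a common configuration by inserting `x` immediately before `p`, after `p`,
before `q`, and after `q`. In other words, it is a weight system. -/
theorem pdPoly_four_term_relation (n : ℕ) (hn : 2 ≤ n)
    (τ : ZMod (2 * n - 1) → ZMod (2 * n - 1)) (p q u : ZMod (2 * n - 1))
    (hτ : IsConfig n τ p q u)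
    (φ₁ φ₂ φ₃ φ₄ : ZMod (2 * n - 1) → ZMod (2 * n))
    (x₁ x₂ x₃ x₄ : ZMod (2 * n))
    (D₁ D₂ D₃ D₄ : ZMod (2 * n) → ZMod (2 * n))
    (h₁ : IsInsertedDiagram n τ u φ₁ x₁ D₁) (hx₁ : x₁ + 1 = φ₁ p)
    (h₂ : IsInsertedDiagram n τ u φ₂ x₂ D₂) (hx₂ : x₂ = φ₂ p + 1)
    (h₃ : IsInsertedDiagram n τ u φ₃ x₃ D₃) (hx₃ : x₃ + 1 = φ₃ q)
    (h₄ : IsInsertedDiagram n τ u φ₄ x₄ D₄) (hx₄ : x₄ = φ₄ q + 1) :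
    pdPoly n D₁ - pdPoly n D₂ + pdPoly n D₃ - pdPoly n D₄ = 0 := by
  obtain ⟨hi, hp, hpq, hu, hfix⟩ := hτ
  classical
  haveI : NeZero (2 * n - 1) := ⟨by omega⟩
  haveI : Fact (1 < 2 * n - 1) := ⟨by omega⟩
  have h10 : (1 : ZMod (2 * n - 1)) ≠ 0 := one_ne_zero
  have hq : τ q = p := by rw [← hp, hi]
  have hpu : p ≠ u := fun h => hpq (by rw [← hp, h, hu])
  have hqu : q ≠ u := fun h => hpq (by rw [← hq, h, hu])
  rw [pdPoly_model n hn τ u p φ₁ x₁ D₁ h₁ hx₁.symm,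
    pdPoly_model n hn τ u (p + 1) φ₂ x₂ D₂ h₂
      (by rw [h₂.1.2 p, if_pos hx₂.symm, hx₂]; ring),
    pdPoly_model n hn τ u q φ₃ x₃ D₃ h₃ hx₃.symm,
    pdPoly_model n hn τ u (q + 1) φ₄ x₄ D₄ h₄
      (by rw [h₄.1.2 q, if_pos hx₄.symm, hx₄]; ring)]
  rw [← Finset.sum_sub_distrib, ← Finset.sum_add_distrib, ← Finset.sum_sub_distrib]
  refine Finset.sum_eq_zero ?_
  intro A hA
  have hA' : ∀ i ∈ (↑A : Set (Option (ZMod (2 * n - 1)))), optInv τ u i ∈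
      (↑A : Set (Option (ZMod (2 * n - 1)))) := by simpa using hA
  generalize (↑A : Set (Option (ZMod (2 * n - 1)))) = B at hA'
  have hinv := optInv_invol τ u hi hu
  have hTp : optInv τ u (some p) = some q := by simp [optInv, hpu, hp]
  have hTq : optInv τ u (some q) = some p := by simp [optInv, hqu, hq]
  generalize optInv τ u = T at *
  clear hA
  have hB' : ∀ i ∈ Bᶜ, T i ∈ Bᶜ := fun i hi h => hi (by simpa [hinv i] using hA' _ h)
  -- the three sorts of equalities
  have out : ∀ C : Set (Option (ZMod (2 * n - 1))), (∀ i ∈ C, T i ∈ C) → none ∉ C → ∀ a b,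
      cycles (optRot a ∘ restrictTo T C) = cycles (optRot b ∘ restrictTo T C) :=
    fun C hC h0 a b => cycles_none _ (restrictTo_invol T hinv C hC) (by simp [restrictTo, h0]) a b
  have main : ∀ C : Set (Option (ZMod (2 * n - 1))), (∀ i ∈ C, T i ∈ C) →
      (cycles (optRot p ∘ restrictTo T C) = cycles (optRot (q + 1) ∘ restrictTo T C) ∧
        cycles (optRot q ∘ restrictTo T C) = cycles (optRot (p + 1) ∘ restrictTo T C)) ∨
      (cycles (optRot p ∘ restrictTo T C) = cycles (optRot (p + 1) ∘ restrictTo T C) ∧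
        cycles (optRot q ∘ restrictTo T C) = cycles (optRot (q + 1) ∘ restrictTo T C)) := by
    intro C hC
    have hI := restrictTo_invol T hinv C hC
    by_cases hpC : some p ∈ C
    · have hqC : some q ∈ C := hTp ▸ hC _ hpC
      exact Or.inl ⟨cycles_slide _ hI p q (by simp [restrictTo, hpC, hTp]),
        cycles_slide _ hI q p (by simp [restrictTo, hqC, hTq])⟩
    · have hqC : some q ∉ C := fun h => hpC (hTq ▸ hC _ h)
      exact Or.inr ⟨cycles_slide _ hI p p (by simp [restrictTo, hpC]),
        cycles_slide _ hI q q (by simp [restrictTo, hqC])⟩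
  unfold optGenus
  by_cases h0 : none ∈ B
  · have o := out Bᶜ hB' (by simpa using h0)
    rw [o (p + 1) p, o q p, o (q + 1) p]
    rcases main B hA' with ⟨e1, e2⟩ | ⟨e1, e2⟩ <;> rw [e1, e2] <;> ring
  · have o := out B hA' h0
    rw [o (p + 1) p, o q p, o (q + 1) p]
    rcases main Bᶜ hB' with ⟨e1, e2⟩ | ⟨e1, e2⟩ <;> rw [e1, e2] <;> ring
end

section
/- Let D_1, D_2, D_3, D_4 be the four chord diagrams of order n obtained from a common configuration as described. For every set A of chords with c ∈ A and c' ∉ A (regarding A as a set of chords of each D_i), the genera of the corresponding partial duals satisfy g_A(D_1) = g_A(D_2) and g_A(D_3) = g_A(D_4). -/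
theorem aux_cycles_remove {α β : Type*} (f : α → α) (g : β → β) (b : β → α) (x : α)
    (hinj : Function.Injective b) (hx : ∀ j, b j ≠ x) (hs : ∀ y, y = x ∨ ∃ j, b j = y)
    (k : β) (hk : f x = b k)
    (hg : ∀ j, f (b j) = b (g j) ∨ (f (b j) = x ∧ g j = k)) : cycles f = cycles g := by
  classical
  have hs' : ∀ y, ∃ i, (y = x ∧ i = k) ∨ b i = y := by
    intro y
    rcases hs y with h | ⟨j, h⟩
    · exact ⟨k, Or.inl ⟨h, rfl⟩⟩
    · exact ⟨j, Or.inr h⟩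
  choose a ha using hs'
  have hax : a x = k := by
    rcases ha x with h | h
    · exact h.2
    · exact absurd h (hx _)
  have hab : ∀ j, a (b j) = j := by
    intro j
    rcases ha (b j) with h | h
    · exact absurd h.1 (hx _)
    · exact hinj h
  unfold cycles
  refine Nat.card_congr
    { toFun := Quot.lift (fun y => Quot.mk _ (a y)) ?_
      invFun := Quot.lift (fun j => Quot.mk _ (b j)) ?_
      left_inv := ?_
      right_inv := ?_ }
  · rintro y z rfl
    rcases hs y with rfl | ⟨j, rfl⟩
    · simp only [hk, hax, hab]
    · rcases hg j with h | ⟨h, h'⟩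
      · simp only [h, hab]
        exact Quot.sound rfl
      · simp only [h, hab, hax]
        exact Quot.sound h'
  · rintro j _ rfl
    rcases hg j with h | ⟨h, h'⟩
    · exact Quot.sound h
    · rw [h', ← hk]
      have e1 : Quot.mk (fun i j => f i = j) (b j) = Quot.mk _ x := Quot.sound h
      have e2 : Quot.mk (fun i j => f i = j) x = Quot.mk _ (f x) := Quot.sound rfl
      exact e1.trans e2
  · rintro ⟨y⟩
    rcases hs y with rfl | ⟨j, rfl⟩
    · simp only [hax]
      symm
      exact Quot.sound hk
    · simp only [hab]
  · rintro ⟨j⟩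
    simp only [hab]

theorem aux_ne (n : ℕ) (hn : 2 ≤ n) : (1 : ZMod (2 * n)) ≠ 0 ∧ (2 : ZMod (2 * n)) ≠ 0 ∧
    (1 : ZMod (2 * n - 1)) ≠ 0 := by
  have : Fact (1 < 2 * n) := ⟨by omega⟩
  have : Fact (1 < 2 * n - 1) := ⟨by omega⟩
  refine ⟨one_ne_zero, ?_, one_ne_zero⟩
  intro h
  have h2 : ((2 : ℕ) : ZMod (2 * n)) = 0 := by exact_mod_cast h
  rw [ZMod.natCast_eq_zero_iff] at h2
  have := Nat.le_of_dvd (by norm_num) h2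
  omega

theorem aux_insertion (n : ℕ) (hn : 2 ≤ n) (φ : ZMod (2 * n - 1) → ZMod (2 * n))
    (x : ZMod (2 * n)) (h : IsInsertion φ x) :
    (∀ j, φ j ≠ x) ∧ (∀ y, y = x ∨ ∃ j, φ j = y) ∧ Function.Injective φ := by
  haveI : NeZero (2 * n) := ⟨by omega⟩
  haveI : NeZero (2 * n - 1) := ⟨by omega⟩
  obtain ⟨h10, h20, -⟩ := aux_ne n hn
  obtain ⟨h0, hstep⟩ := h
  have hx : ∀ j, φ j ≠ x := by
    have key : ∀ k : ℕ, φ (k : ZMod (2 * n - 1)) ≠ x := by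
      intro k
      induction k with
      | zero => simpa using h0
      | succ k ih =>
        rw [Nat.cast_succ, hstep]
        split_ifs with hc
        · intro h'
          apply h10
          linear_combination h' - hc
        · exact hc
    intro j
    rw [← ZMod.natCast_zmod_val j]
    exact key _
  have hs : ∀ y, y = x ∨ ∃ j, φ j = y := by
    have key : ∀ k : ℕ, (∃ j, φ j = φ 0 + k) ∨ (φ 0 + k = x ∧ ∃ j, φ j = x + 1) := by
      intro k
      induction k with
      | zero => exact Or.inl ⟨0, by simp⟩
      | succ k ih =>
        rcases ih with ⟨j, hj⟩ | ⟨h1, j, hj⟩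
        · have := hstep j
          split_ifs at this with hc
          · right
            refine ⟨by push_cast; linear_combination hc - hj, j + 1, ?_⟩
            linear_combination this + hc
          · left
            exact ⟨j + 1, by push_cast; linear_combination this + hj⟩
        · left
          exact ⟨j, by push_cast; linear_combination hj - h1⟩
    intro y
    have := key (y - φ 0).val
    rw [ZMod.natCast_zmod_val] at this
    rcases this with ⟨j, hj⟩ | ⟨h1, -⟩
    · exact Or.inr ⟨j, by rw [hj]; ring⟩
    · exact Or.inl (by rw [← h1]; ring)
  refine ⟨hx, hs, ?_⟩
  let F : Option (ZMod (2 * n - 1)) → ZMod (2 * n) := fun o => o.elim x φ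
  have hF : Function.Surjective F := by
    intro y
    rcases hs y with rfl | ⟨j, rfl⟩
    · exact ⟨none, rfl⟩
    · exact ⟨some j, rfl⟩
  have hF2 : Function.Bijective F := by
    rw [Fintype.bijective_iff_surjective_and_card]
    refine ⟨hF, ?_⟩
    rw [Fintype.card_option, ZMod.card, ZMod.card]
    omega
  intro i j hij
  exact Option.some.inj (hF2.1 (show F (some i) = F (some j) from hij))

theorem aux_cycles_insertion (n : ℕ) (hn : 2 ≤ n) (b : ZMod (2 * n - 1) → ZMod (2 * n))
    (y : ZMod (2 * n)) (hb : IsInsertion b y) (h : ZMod (2 * n) → ZMod (2 * n))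
    (ρ : ZMod (2 * n - 1) → ZMod (2 * n - 1)) (hy : h y = y) (hρ : ∀ j, h (b j) = b (ρ j)) :
    cycles (rot n ∘ h) = cycles (fun j => ρ j + 1) := by
  obtain ⟨h10, h20, -⟩ := aux_ne n hn
  obtain ⟨hx, hs, hinj⟩ := aux_insertion n hn b y hb
  obtain ⟨k, hk⟩ : ∃ k, b k = y + 1 := by
    rcases hs (y + 1) with h' | h'
    · exact absurd (by linear_combination h') h10
    · exact h'
  refine aux_cycles_remove _ _ b y hinj hx hs k ?_ ?_
  · simp [rot, hy, hk]
  · intro j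
    have := hb.2 (ρ j)
    simp only [Function.comp, rot, hρ]
    split_ifs at this with hc
    · right
      refine ⟨hc, hinj ?_⟩
      rw [this, hk]
      linear_combination hc
    · left
      exact this.symm

theorem aux_swap_insertion (n : ℕ) (hn : 2 ≤ n) (φ : ZMod (2 * n - 1) → ZMod (2 * n))
    (x : ZMod (2 * n)) (p : ZMod (2 * n - 1)) (h : IsInsertion φ x)
    (hp : x + 1 = φ p ∨ x = φ p + 1) :
    IsInsertion (fun j => if j = p then x else φ j) (φ p) := by
  obtain ⟨h10, h20, h10'⟩ := aux_ne n hn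
  obtain ⟨hx, hs, hinj⟩ := aux_insertion n hn φ x h
  constructor
  · dsimp only
    split_ifs with h0
    · exact (hx p).symm
    · exact fun h' => h0 (hinj h')
  · intro j
    have hst := h.2 j
    have hpj : j = p → j + 1 ≠ p := by
      rintro rfl h'
      exact h10' (by linear_combination h')
    have hi1 : φ j = φ p → j = p := fun h => hinj h
    have hi2 : φ (j + 1) = φ p → j + 1 = p := fun h => hinj h
    have hxj := hx j
    have hxj1 := hx (j + 1)
    have hxp := hx p
    dsimp only
    grind

theorem aux_main (n : ℕ) (hn : 2 ≤ n)
    (τ : ZMod (2 * n - 1) → ZMod (2 * n - 1)) (p u : ZMod (2 * n - 1))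
    (hτ : Function.Involutive τ)
    (φ φ' : ZMod (2 * n - 1) → ZMod (2 * n)) (x x' : ZMod (2 * n))
    (D D' : ZMod (2 * n) → ZMod (2 * n))
    (h : IsInsertedDiagram n τ u φ x D) (hx : x + 1 = φ p)
    (h' : IsInsertedDiagram n τ u φ' x' D') (hx' : x' = φ' p + 1)
    (B : Set (ZMod (2 * n - 1))) (hB : ∀ j ∈ B, τ j ∈ B)
    (hc : p ∈ B) (hc' : u ∉ B) :
    pdGenus n D (φ '' B) = pdGenus n D' (φ' '' B) := by
  classical
  have hBc : ∀ j, j ∉ B → τ j ∉ B := fun j hj h => hj (by simpa [hτ j] using hB _ h)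
  have key1 : ∀ (φ : ZMod (2 * n - 1) → ZMod (2 * n)) (x : ZMod (2 * n))
      (D : ZMod (2 * n) → ZMod (2 * n)), IsInsertedDiagram n τ u φ x D →
      cycles (rot n ∘ restrictTo D (φ '' B)) = cycles (fun j => restrictTo τ B j + 1) := by
    intro φ x D h
    obtain ⟨hav, hs, hinj⟩ := aux_insertion n hn φ x h.1
    refine aux_cycles_insertion n hn φ x h.1 _ _ ?_ ?_
    · have : x ∉ φ '' B := by
        rintro ⟨j, -, hj⟩
        exact hav j hj
      simp only [restrictTo, if_neg this]
    · intro j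
      simp only [restrictTo, hinj.mem_set_image]
      split_ifs with hj
      · exact h.2.1 j (fun e => hc' (e ▸ hj))
      · rfl
  have key2 : ∀ (φ : ZMod (2 * n - 1) → ZMod (2 * n)) (x : ZMod (2 * n))
      (D : ZMod (2 * n) → ZMod (2 * n)), IsInsertedDiagram n τ u φ x D →
      (x + 1 = φ p ∨ x = φ p + 1) →
      cycles (rot n ∘ restrictTo D (φ '' B)ᶜ) =
        cycles (fun j => (if j = p then u else if j = u then p else
          if j ∈ B then j else τ j) + 1) := by
    intro φ x D h hp
    obtain ⟨hav, hs, hinj⟩ := aux_insertion n hn φ x h.1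
    have hup : u ≠ p := fun e => hc' (e ▸ hc)
    have hxB : x ∉ φ '' B := by
      rintro ⟨j, -, hj⟩
      exact hav j hj
    refine aux_cycles_insertion n hn _ (φ p) (aux_swap_insertion n hn φ x p h.1 hp) _ _ ?_ ?_
    · simp only [restrictTo, Set.mem_compl_iff, hinj.mem_set_image, hc, not_true, if_false]
    · intro j
      by_cases hjp : j = p
      · simp only [hjp, if_true, restrictTo, Set.mem_compl_iff, hxB, not_false_eq_true, hup,
          if_false, h.2.2.2]
      · by_cases hju : j = u
        · simp only [hju, hup, if_true, restrictTo, Set.mem_compl_iff, hinj.mem_set_image, hc',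
            not_false_eq_true, if_false, h.2.2.1]
        · by_cases hjB : j ∈ B
          · simp only [hju, hjp, hjB, if_true, restrictTo, Set.mem_compl_iff,
              hinj.mem_set_image, not_true, if_false]
          · have : τ j ≠ p := fun e => hBc j hjB (e ▸ hc)
            simp only [hju, hjp, hjB, this, if_true, restrictTo, Set.mem_compl_iff,
              hinj.mem_set_image, not_false_eq_true, if_false, h.2.1 j hju]
  unfold pdGenus
  rw [key1 φ x D h, key1 φ' x' D' h', key2 φ x D h (Or.inl hx), key2 φ' x' D' h' (Or.inr hx')]

/-- For a set `A` of chords with `c ∈ A` and `c' ∉ A`, the partial duals satisfy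
`g_A(D₁) = g_A(D₂)` and `g_A(D₃) = g_A(D₄)`. -/
theorem pdGenus_eq_of_c_not_c' (n : ℕ) (hn : 2 ≤ n)
    (τ : ZMod (2 * n - 1) → ZMod (2 * n - 1)) (p q u : ZMod (2 * n - 1))
    (hτ : IsConfig n τ p q u)
    (φ₁ φ₂ φ₃ φ₄ : ZMod (2 * n - 1) → ZMod (2 * n))
    (x₁ x₂ x₃ x₄ : ZMod (2 * n))
    (D₁ D₂ D₃ D₄ : ZMod (2 * n) → ZMod (2 * n))
    (h₁ : IsInsertedDiagram n τ u φ₁ x₁ D₁) (hx₁ : x₁ + 1 = φ₁ p)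
    (h₂ : IsInsertedDiagram n τ u φ₂ x₂ D₂) (hx₂ : x₂ = φ₂ p + 1)
    (h₃ : IsInsertedDiagram n τ u φ₃ x₃ D₃) (hx₃ : x₃ + 1 = φ₃ q)
    (h₄ : IsInsertedDiagram n τ u φ₄ x₄ D₄) (hx₄ : x₄ = φ₄ q + 1)
    (B : Set (ZMod (2 * n - 1))) (hB : ∀ j ∈ B, τ j ∈ B)
    (hc : p ∈ B) (hc' : u ∉ B) :
    pdGenus n D₁ (φ₁ '' B) = pdGenus n D₂ (φ₂ '' B) ∧
    pdGenus n D₃ (φ₃ '' B) = pdGenus n D₄ (φ₄ '' B) := by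
  obtain ⟨hinv, hpq, -, -, -⟩ := hτ
  exact ⟨aux_main n hn τ p u hinv φ₁ φ₂ x₁ x₂ D₁ D₂ h₁ hx₁ h₂ hx₂ B hB hc hc',
    aux_main n hn τ q u hinv φ₃ φ₄ x₃ x₄ D₃ D₄ h₃ hx₃ h₄ hx₄ B hB (hpq ▸ hB p hc) hc'⟩
end

section
/- (Sliding Lemma, chord-diagram form.) Let σ be a chord diagram of order n with distinct chords c = {p, q} and e, where the endpoint x of e is the immediate cyclic predecessor of p, and let σ' be the slide of e along c. Then c(r ∘ σ') = c(r ∘ σ); in particular the slide preserves the number of boundary components and the genus of the associated one-vertex ribbon graph: g(σ') = g(σ). -/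
/-- Points of the configuration together with the inserted one (`none`). -/
noncomputable def slideExt {m N : ℕ} (φ : ZMod m → ZMod N) (x : ZMod N) :
    Option (ZMod m) → ZMod N
  | none => x
  | some j => φ j

theorem insertion_ne {m N : ℕ} [NeZero m] (hN : 2 ≤ N) (φ : ZMod m → ZMod N) (x : ZMod N)
    (h : IsInsertion φ x) (j : ZMod m) : φ j ≠ x := by
  have : Fact (1 < N) := ⟨hN⟩
  have key : ∀ k : ℕ, φ (k : ZMod m) ≠ x := by
    intro k
    induction k with
    | zero => simpa using h.1
    | succ k ih =>
      rw [Nat.cast_succ, h.2]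
      split_ifs with hc
      · intro h2
        have : (1 : ZMod N) = 0 := by linear_combination h2 - hc
        exact one_ne_zero this
      · exact hc
  have := key j.val
  rwa [ZMod.natCast_zmod_val] at this

theorem slideExt_bij (n : ℕ) (hn : 2 ≤ n) (φ : ZMod (2 * n - 1) → ZMod (2 * n))
    (x : ZMod (2 * n)) (h : IsInsertion φ x) (p : ZMod (2 * n - 1)) (hp : x + 1 = φ p) :
    Function.Bijective (slideExt φ x) := by
  have : NeZero (2 * n) := ⟨by omega⟩
  have : NeZero (2 * n - 1) := ⟨by omega⟩
  have hsurj : Function.Surjective (slideExt φ x) := by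
    have key : ∀ k : ℕ, ∃ a, slideExt φ x a = x + (k : ZMod (2 * n)) := by
      intro k
      induction k with
      | zero => exact ⟨none, by simp [slideExt]⟩
      | succ k ih =>
        obtain ⟨a, ha⟩ := ih
        rw [Nat.cast_succ, ← add_assoc, ← ha]
        cases a with
        | none => exact ⟨some p, hp.symm⟩
        | some j =>
          by_cases hc : φ j + 1 = x
          · exact ⟨none, hc.symm⟩
          · refine ⟨some (j + 1), ?_⟩
            simp only [slideExt]
            rw [h.2, if_neg hc]
    intro y
    obtain ⟨a, ha⟩ := key (y - x).val
    refine ⟨a, ?_⟩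
    rw [ha, ZMod.natCast_zmod_val]
    ring
  rw [Fintype.bijective_iff_surjective_and_card]
  refine ⟨hsurj, ?_⟩
  rw [Fintype.card_option, ZMod.card, ZMod.card]
  omega

/-- Model of the rotation on the extended configuration, the new point preceding `p`. -/
noncomputable def slideR {m : ℕ} (p : ZMod m) : Option (ZMod m) → Option (ZMod m)
  | none => some p
  | some j => if j + 1 = p then none else some (j + 1)

/-- Model of the chord involution on the extended configuration. -/
noncomputable def slideS {m : ℕ} (τ : ZMod m → ZMod m) (u : ZMod m) :
    Option (ZMod m) → Option (ZMod m)
  | none => some u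
  | some j => if j = u then none else some (τ j)

theorem cycles_model (n : ℕ) (hn : 2 ≤ n)
    (τ : ZMod (2 * n - 1) → ZMod (2 * n - 1)) (p u : ZMod (2 * n - 1))
    (φ : ZMod (2 * n - 1) → ZMod (2 * n)) (x : ZMod (2 * n))
    (σ : ZMod (2 * n) → ZMod (2 * n))
    (hσ : IsInsertedDiagram n τ u φ x σ) (hx : x + 1 = φ p) :
    cycles (rot n ∘ σ) = cycles (slideR p ∘ slideS τ u) := by
  have : NeZero (2 * n - 1) := ⟨by omega⟩
  obtain ⟨hi, h1, h2, h3⟩ := hσ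
  have hb := slideExt_bij n hn φ x hi p hx
  have hne := insertion_ne (by omega) φ x hi
  have hR : ∀ a, slideExt φ x (slideR p a) = rot n (slideExt φ x a) := by
    intro a
    cases a with
    | none => simp only [slideR, slideExt, rot]; exact hx.symm
    | some j =>
      have hs := hi.2 j
      simp only [slideR, rot]
      by_cases hc : φ j + 1 = x
      · rw [if_pos hc] at hs
        have : j + 1 = p := by
          have : slideExt φ x (some (j + 1)) = slideExt φ x (some p) := by
            simp only [slideExt]
            rw [hs, ← hx, ← hc]; ring
          simpa using hb.1 this
        rw [if_pos this]
        exact hc.symm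
      · rw [if_neg hc] at hs
        have : j + 1 ≠ p := by
          intro hjp
          rw [hjp, ← hx] at hs
          exact hne j (add_right_cancel hs).symm
        rw [if_neg this]
        exact hs
  have hS : ∀ a, slideExt φ x (slideS τ u a) = σ (slideExt φ x a) := by
    intro a
    cases a with
    | none => simp only [slideS, slideExt]; exact h3.symm
    | some j =>
      simp only [slideS]
      split_ifs with hj
      · subst hj; exact h2.symm
      · exact (h1 j hj).symm
  symm
  refine cycles_conj (Equiv.ofBijective _ hb) _ _ ?_
  intro a
  simp only [Equiv.ofBijective_apply, Function.comp_apply]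
  rw [hR, hS]

theorem cycles_slide_s5 {m : ℕ} (τ : ZMod m → ZMod m) (p q u : ZMod m)
    (hinv : Function.Involutive τ) (hpq : τ p = q) (hne : p ≠ q) (hu : τ u = u) :
    cycles (slideR (q + 1) ∘ slideS τ u) = cycles (slideR p ∘ slideS τ u) := by
  classical
  have hpu : p ≠ u := by rintro rfl; exact hne (hu.symm.trans hpq)
  have hqu : q ≠ u := by
    rintro rfl; exact hne (by rw [← hinv p, hpq, hu])
  set f := slideR p ∘ slideS τ u with hf
  set f' := slideR (q + 1) ∘ slideS τ u with hf'
  have fn : f none = if u + 1 = p then none else some (u + 1) := rfl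
  have fu : f (some u) = some p := by simp [hf, slideS, slideR]
  have fj : ∀ j, j ≠ u → f (some j) = if τ j + 1 = p then none else some (τ j + 1) := by
    intro j hj; simp [hf, slideS, slideR, hj]
  have gn : f' none = some (u + 1) := by
    simp [hf', slideS, slideR, hqu.symm]
  have gu : f' (some u) = some (q + 1) := by simp [hf', slideS, slideR]
  have gp : f' (some p) = none := by simp [hf', slideS, slideR, hpu, hpq]
  have gj : ∀ j, j ≠ u → j ≠ p → f' (some j) = some (τ j + 1) := by
    intro j hj hjp
    have : τ j ≠ q := by
      rw [← hpq]; exact fun h => hjp (hinv.injective h)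
    simp [hf', slideS, slideR, hj, this]
  clear_value f f'
  have Qf : ∀ a, Quot.mk (fun i j => f i = j) (f a) = Quot.mk _ a :=
    fun a => (Quot.sound (r := fun i j => f i = j) (a := a) (b := f a) rfl).symm
  have Qg : ∀ a, Quot.mk (fun i j => f' i = j) (f' a) = Quot.mk _ a :=
    fun a => (Quot.sound (r := fun i j => f' i = j) (a := a) (b := f' a) rfl).symm
  have fp := fj p hpu
  rw [hpq] at fp
  have A : ∀ a b, f' a = b →
      (if a = some p then Quot.mk (fun i j => f i = j) none else Quot.mk _ a) =
      (if b = some p then Quot.mk (fun i j => f i = j) none else Quot.mk _ b) := by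
    rintro a _ rfl
    rcases a with _ | j
    · rw [gn]
      by_cases h : u + 1 = p
      · simp [h]
      · rw [if_neg h] at fn
        have := Qf none
        rw [fn] at this
        simp [h, this]
    · by_cases hju : j = u
      · subst hju
        have h1 := Qf (some j)
        have h2 := Qf (some p)
        rw [fu] at h1
        rw [gu]
        by_cases h : q + 1 = p
        · rw [fp, if_pos h] at h2
          simp [h, hpu.symm, h1, h2]
        · rw [fp, if_neg h] at h2
          simp [h, hpu.symm, h1, h2]
      · by_cases hjp : j = p
        · subst hjp; simp [gp]
        · have h1 := Qf (some j)
          rw [gj j hju hjp]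
          rw [fj j hju] at h1
          by_cases h : τ j + 1 = p
          · rw [if_pos h] at h1
            simp [h, hjp, h1]
          · rw [if_neg h] at h1
            simp [h, hjp, h1]
  have B : ∀ a b, f a = b →
      (if a = some p then Quot.mk (fun i j => f' i = j) (some u) else Quot.mk _ a) =
      (if b = some p then Quot.mk (fun i j => f' i = j) (some u) else Quot.mk _ b) := by
    rintro a _ rfl
    have hp' := Qg (some p)
    rw [gp] at hp'
    rcases a with _ | j
    · rw [fn]
      by_cases h : u + 1 = p
      · simp [h]
      · have := Qg none
        rw [gn] at this
        simp [h, this]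
    · by_cases hju : j = u
      · subst hju
        simp [fu, hpu.symm]
      · by_cases hjp : j = p
        · subst hjp
          have h1 := Qg (some u)
          rw [gu] at h1
          rw [fp]
          by_cases h : q + 1 = j
          · rw [h] at h1
            simp [h, h1, hp']
          · simp [h, h1]
        · have h1 := Qg (some j)
          rw [fj j hju]
          rw [gj j hju hjp] at h1
          by_cases h : τ j + 1 = p
          · rw [h] at h1
            simp [h, hjp, h1, hp']
          · simp [h, hjp, h1]
  unfold cycles
  refine Nat.card_congr ⟨Quot.lift _ A, Quot.lift _ B, ?_, ?_⟩
  · rintro ⟨a⟩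
    by_cases h : a = some p
    · subst h
      have hp' := Qg (some p)
      rw [gp] at hp'
      simp [hp']
    · simp [h]
  · rintro ⟨a⟩
    by_cases h : a = some p
    · subst h
      have h1 := Qf (some u)
      rw [fu] at h1
      simp [h1, hpu.symm]
    · simp [h]

/-- Sliding Lemma, chord-diagram form: if `σ'` is obtained from `σ` by sliding the
chord `e = {x, u}` along the chord `c = {p, q}` (moving the endpoint `x` of `e` from
the position immediately preceding `p` to the position immediately following `q`),
then `c(r ∘ σ') = c(r ∘ σ)`: the slide preserves the number of boundary components,
and hence the genus, of the associated one-vertex ribbon graph. -/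
theorem slide_preserves_boundary_and_genus (n : ℕ) (hn : 2 ≤ n)
    (τ : ZMod (2 * n - 1) → ZMod (2 * n - 1)) (p q u : ZMod (2 * n - 1))
    (hτ : IsConfig n τ p q u)
    (φ φ' : ZMod (2 * n - 1) → ZMod (2 * n)) (x x' : ZMod (2 * n))
    (σ σ' : ZMod (2 * n) → ZMod (2 * n))
    (hσ : IsInsertedDiagram n τ u φ x σ) (hx : x + 1 = φ p)
    (hσ' : IsInsertedDiagram n τ u φ' x' σ') (hx' : x' = φ' q + 1) :
    cycles (rot n ∘ σ') = cycles (rot n ∘ σ) ∧ genus n σ' = genus n σ := by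
  have h1 := cycles_model n hn τ p u φ x σ hσ hx
  have hq : x' + 1 = φ' (q + 1) := by
    rw [hσ'.1.2 q, if_pos hx'.symm, hx']; ring
  have h2 := cycles_model n hn τ (q + 1) u φ' x' σ' hσ' hq
  have h3 := cycles_slide_s5 τ p q u hτ.1 hτ.2.1 hτ.2.2.1 hτ.2.2.2.1
  have h : cycles (rot n ∘ σ') = cycles (rot n ∘ σ) := by rw [h1, h2, h3]
  exact ⟨h, by unfold genus; rw [h]⟩
end

section
/- The partial-dual genus polynomial is multiplicative under connected sum (juxtaposition) of chord diagrams: if σ₁ is a chord diagram of order n₁, σ₂ is a chord diagram of order n₂, and σ is the chord diagram of order n₁ + n₂ on ZMod (2(n₁+n₂)) whose first 2n₁ points are paired according to σ₁ and whose last 2n₂ points are paired according to σ₂ (shifted by 2n₁), with no chord joining the two blocks, then ∂Γ_σ(z) = ∂Γ_{σ₁}(z) · ∂Γ_{σ₂}(z). -/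
lemma cyc_mk_eq_iff {α : Type*} (f : Equiv.Perm α) (x y : α) :
    (Quot.mk (fun i j => f i = j) x = Quot.mk (fun i j => f i = j) y) ↔ f.SameCycle x y := by
  constructor
  · intro h
    have h2 := Quot.eqvGen_exact h
    induction h2 with
    | rel a b hab => exact ⟨1, by simpa using hab⟩
    | refl a => exact Equiv.Perm.SameCycle.refl _ _
    | symm a b _ ih => exact (ih (Quot.eqvGen_sound (by assumption))).symm
    | trans a b c _ _ ih1 ih2 =>
      exact (ih1 (Quot.eqvGen_sound (by assumption))).trans (ih2 (Quot.eqvGen_sound (by assumption)))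
  · rintro ⟨k, hk⟩
    subst hk
    have hstep : ∀ a, Quot.mk (fun i j => f i = j) (f a) = Quot.mk (fun i j => f i = j) a :=
    fun a => (Quot.sound (r := fun i j => f i = j) rfl).symm
    induction k with
    | zero => simp
    | succ k ih => rw [add_comm, zpow_add, Equiv.Perm.mul_apply, zpow_one, hstep]; exact ih
    | pred k ih =>
      rw [← hstep ((f ^ (-(k : ℤ) - 1)) x)]
      rw [← Equiv.Perm.mul_apply, ← zpow_one_add]
      simpa using ih

lemma cyc_merge {α : Type*} [Finite α] [DecidableEq α] (f g : α → α) (x y : α)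
    (hg : ∀ i, g i = Equiv.swap x y (f i))
    (hf : Quot.mk (fun i j => f i = j) x ≠ Quot.mk (fun i j => f i = j) y)
    (hgxy : Quot.mk (fun i j => g i = j) x = Quot.mk (fun i j => g i = j) y) :
    cycles f = cycles g + 1 := by
  classical
  have hstepf : ∀ a, Quot.mk (fun i j => f i = j) (f a) = Quot.mk (fun i j => f i = j) a :=
    fun a => (Quot.sound (r := fun i j => f i = j) rfl).symm
  have hstepg : ∀ a, Quot.mk (fun i j => g i = j) (g a) = Quot.mk (fun i j => g i = j) a :=
    fun a => (Quot.sound (r := fun i j => g i = j) rfl).symm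
  have hfin : Finite (Quot fun i j => f i = j) := inferInstance
  let P : α → {q : Quot (fun i j => f i = j) // q ≠ Quot.mk _ y} := fun i =>
    if h : Quot.mk (fun i j => f i = j) i = Quot.mk _ y then ⟨Quot.mk _ x, hf⟩ else ⟨Quot.mk _ i, h⟩
  have hPcongr : ∀ i j, Quot.mk (fun i j => f i = j) i = Quot.mk (fun i j => f i = j) j →
      P i = P j := by
    intro i j h
    simp only [P, h]
  have hPxy : P x = P y := by
    simp [P, hf]
  let T : Quot (fun i j => g i = j) → {q : Quot (fun i j => f i = j) // q ≠ Quot.mk _ y} :=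
    Quot.lift P (by
      rintro i j rfl
      rw [hg]
      rw [hPcongr i (f i) (hstepf i).symm]
      by_cases h1 : f i = x
      · rw [h1, Equiv.swap_apply_left, hPxy]
      · by_cases h2 : f i = y
        · rw [h2, Equiv.swap_apply_right, hPxy]
        · rw [Equiv.swap_apply_of_ne_of_ne h1 h2])
  let I : Quot (fun i j => f i = j) → Quot (fun i j => g i = j) :=
    Quot.lift (fun i => Quot.mk _ i) (by
      rintro i j rfl
      change Quot.mk _ i = Quot.mk _ (f i)
      rw [← hstepg i, hg]
      by_cases h1 : f i = x
      · rw [h1, Equiv.swap_apply_left, hgxy]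
      · by_cases h2 : f i = y
        · rw [h2, Equiv.swap_apply_right, hgxy]
        · rw [Equiv.swap_apply_of_ne_of_ne h1 h2])
  have hIP : ∀ i, I (P i).1 = Quot.mk _ i := by
    intro i
    by_cases h : Quot.mk (fun i j => f i = j) i = Quot.mk _ y
    · have h1 : (P i).1 = Quot.mk _ x := by simp [P, h]
      rw [h1]
      have h2 := congrArg I h
      change Quot.mk _ i = Quot.mk _ y at h2
      rw [h2]
      exact hgxy
    · have h1 : (P i).1 = Quot.mk _ i := by simp [P, h]
      rw [h1]
  let e : Quot (fun i j => g i = j) ≃ {q : Quot (fun i j => f i = j) // q ≠ Quot.mk _ y} :=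
    { toFun := T
      invFun := fun q => I q.1
      left_inv := by
        intro q
        induction q using Quot.ind with
        | mk i => exact hIP i
      right_inv := by
        rintro ⟨q, hq⟩
        induction q using Quot.ind with
        | mk i =>
          change P i = _
          simp only [P]
          rw [dif_neg hq] }
  unfold cycles
  rw [Nat.card_congr e]
  have := Fintype.ofFinite (Quot fun i j => f i = j)
  rw [Nat.card_eq_fintype_card, Nat.card_eq_fintype_card, Fintype.card_subtype_compl]
  have : 0 < Fintype.card (Quot fun i j => f i = j) := Fintype.card_pos_iff.2 ⟨Quot.mk _ y⟩
  simp
  omega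

lemma cyc_join {α : Type*} [Finite α] [DecidableEq α] (f : Equiv.Perm α) (x y : α)
    (h : ¬ f.SameCycle x y) : (Equiv.swap x y * f).SameCycle x y := by
  have hper : ∃ k, 0 < k ∧ (f ^ k) x = x := by
    refine ⟨orderOf f, orderOf_pos f, by simp [pow_orderOf_eq_one]⟩
  classical
  obtain ⟨hk0, hk⟩ := Nat.find_spec hper
  have hmin := fun m => Nat.find_min hper (m := m)
  generalize Nat.find hper = k at hk0 hk hmin
  have hind : ∀ i, i < k → ((Equiv.swap x y * f) ^ i) x = (f ^ i) x := by
    intro i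
    induction i with
    | zero => simp
    | succ i ih =>
      intro hi
      rw [pow_succ', Equiv.Perm.mul_apply, ih (by omega), Equiv.Perm.mul_apply,
        ← Equiv.Perm.mul_apply f, ← pow_succ']
      apply Equiv.swap_apply_of_ne_of_ne
      · intro h'
        exact hmin _ hi ⟨by omega, h'⟩
      · intro h'
        exact h ⟨(i + 1 : ℕ), by rw [zpow_natCast]; exact h'⟩
  obtain ⟨m, rfl⟩ : ∃ m, k = m + 1 := ⟨k - 1, by omega⟩
  refine ⟨(m + 1 : ℕ), ?_⟩
  rw [zpow_natCast, pow_succ', Equiv.Perm.mul_apply, hind m (by omega), Equiv.Perm.mul_apply,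
        ← Equiv.Perm.mul_apply f, ← pow_succ', hk, Equiv.swap_apply_left]

lemma cyc_cut {α : Type*} [Finite α] [DecidableEq α] (f : Equiv.Perm α) (x y : α) (hxy : x ≠ y)
    (h : f.SameCycle x y) : ¬ (Equiv.swap x y * f).SameCycle x y := by
  have hper : ∃ k : ℕ, (f ^ k) x = y := by
    obtain ⟨i, _, hi⟩ := h.exists_pow_eq'
    exact ⟨i, hi⟩
  classical
  have hk := Nat.find_spec hper
  have hmin := fun m => Nat.find_min hper (m := m)
  generalize Nat.find hper = k at hk hmin
  have hk0 : 0 < k := by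
    rcases Nat.eq_zero_or_pos k with h0 | h0
    · subst h0; exact absurd (by simpa using hk) hxy
    · exact h0
  intro hc
  obtain ⟨m, _, hm⟩ := hc.exists_pow_eq'
  have hind : ∀ m : ℕ, ∃ i < k, ((Equiv.swap x y * f) ^ m) x = (f ^ i) x := by
    intro m
    induction m with
    | zero => exact ⟨0, hk0, by simp⟩
    | succ m ih =>
      obtain ⟨i, hi, hi2⟩ := ih
      rw [pow_succ', Equiv.Perm.mul_apply, hi2, Equiv.Perm.mul_apply,
        ← Equiv.Perm.mul_apply f, ← pow_succ']
      by_cases hik : i + 1 = k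
      · refine ⟨0, hk0, ?_⟩
        rw [hik, hk, Equiv.swap_apply_right]; simp
      · refine ⟨i + 1, by omega, ?_⟩
        apply Equiv.swap_apply_of_ne_of_ne
        · intro h'
          apply hmin (k - (i + 1)) (by omega)
          have h3 : k = (k - (i + 1)) + (i + 1) := by omega
          rw [h3, pow_add, Equiv.Perm.mul_apply, h'] at hk
          exact hk
        · exact hmin (i + 1) (by omega)
  obtain ⟨i, hi, hi2⟩ := hind m
  exact hmin i hi (hi2 ▸ hm)

lemma cyc_swap_join {α : Type*} [Finite α] [DecidableEq α] (f : Equiv.Perm α) (x y : α)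
    (h : ¬ f.SameCycle x y) : cycles f = cycles (Equiv.swap x y * f : Equiv.Perm α) + 1 := by
  apply cyc_merge _ _ x y (fun i => rfl)
  · rw [Ne, cyc_mk_eq_iff]; exact h
  · exact (cyc_mk_eq_iff (Equiv.swap x y * f) x y).2 (cyc_join f x y h)

lemma cyc_swap_cut {α : Type*} [Finite α] [DecidableEq α] (f : Equiv.Perm α) (x y : α)
    (hxy : x ≠ y) (h : f.SameCycle x y) :
    cycles (Equiv.swap x y * f : Equiv.Perm α) = cycles f + 1 := by
  apply cyc_merge _ _ x y (fun i => by simp)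
  · rw [Ne, cyc_mk_eq_iff]; exact cyc_cut f x y hxy h
  · rw [cyc_mk_eq_iff]; exact h

lemma restrictTo_involutive {α : Type*} {σ : α → α} (hσ : Function.Involutive σ) {A : Set α}
    (hA : ∀ i ∈ A, σ i ∈ A) : Function.Involutive (restrictTo σ A) := by
  intro i
  unfold restrictTo
  by_cases h : i ∈ A
  · simp [h, hA i h, hσ i]
  · simp [h]

lemma cyc_bound {α : Type*} [Fintype α] [DecidableEq α] (r : Equiv.Perm α) {σ : α → α}
    (hσ : Function.Involutive σ) (hfp : ∀ i, σ i ≠ i) (m : ℕ) :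
    ∀ A : Finset α, A.card = m → (∀ i ∈ A, σ i ∈ A) →
    ∃ k, A.card = 2 * k ∧ cycles (r ∘ restrictTo σ A) ≤ k + cycles r ∧
      cycles (r ∘ restrictTo σ A) % 2 = (k + cycles r) % 2 := by
  induction m using Nat.strong_induction_on with
  | _ m ih =>
  intro A hm hA
  rcases A.eq_empty_or_nonempty with rfl | ⟨a, ha⟩
  · have : restrictTo σ ((∅ : Finset α) : Set α) = id := by
      funext i; simp [restrictTo]
    exact ⟨0, by rw [this]; simp⟩
  · have hb := hA a ha
    set B := (A.erase a).erase (σ a) with hB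
    have hb' : σ a ∈ A.erase a := Finset.mem_erase.2 ⟨hfp a, hb⟩
    have hcard : B.card + 2 = A.card := by
      have h1 := Finset.card_erase_add_one hb'
      have h2 := Finset.card_erase_add_one ha
      rw [← hB] at h1
      omega
    have hBi : ∀ i ∈ B, σ i ∈ B := by
      intro i hi
      simp only [hB, Finset.mem_erase] at hi ⊢
      obtain ⟨h1, h2, h3⟩ := hi
      refine ⟨fun h => h2 (hσ.injective h), fun h => h1 ?_, hA i h3⟩
      rw [← h, hσ]
    obtain ⟨k, hk1, hk2, hk3⟩ := ih B.card (by omega) B rfl hBi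
    set h : Equiv.Perm α := r * (restrictTo_involutive hσ (A := (B : Set α)) hBi).toPerm with hh
    have hhc : (h : α → α) = r ∘ restrictTo σ B := rfl
    have heq : (Equiv.swap (h a) (h (σ a)) * h : Equiv.Perm α) = (r ∘ restrictTo σ A : α → α) := by
      rw [← Equiv.mul_swap_eq_swap_mul]
      funext i
      rw [Equiv.Perm.mul_apply, hhc]
      simp only [Function.comp_apply]
      congr 1
      by_cases h1 : i = a
      · subst h1
        rw [Equiv.swap_apply_left]
        simp [restrictTo, hB, ha]
      · by_cases h2 : i = σ a
        · subst h2
          rw [Equiv.swap_apply_right]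
          simp [restrictTo, hB, hb, hσ a]
        · rw [Equiv.swap_apply_of_ne_of_ne h1 h2]
          simp [restrictTo, hB, h1, h2]
    have hne : h a ≠ h (σ a) := fun h' => hfp a (h.injective h').symm
    refine ⟨k + 1, by omega, ?_⟩
    rw [← heq]
    rw [← hhc] at hk2 hk3
    by_cases hs : h.SameCycle (h a) (h (σ a))
    · have := cyc_swap_cut h _ _ hne hs
      omega
    · have := cyc_swap_join h _ _ hs
      omega

lemma cyc_congr {α β : Type*} (e : α ≃ β) (f : α → α) (g : β → β)
    (h : ∀ i, e (f i) = g (e i)) : cycles f = cycles g := by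
  unfold cycles
  refine Nat.card_congr (Quot.congr e ?_)
  intro a b
  rw [← h, e.apply_eq_iff_eq]

lemma cyc_sum {α β : Type*} [Finite α] [Finite β] (f : α → α) (g : β → β) :
    cycles (Sum.map f g) = cycles f + cycles g := by
  unfold cycles
  rw [← Nat.card_sum]
  refine Nat.card_congr
    { toFun := Quot.lift (Sum.elim (fun a => Sum.inl (Quot.mk _ a)) (fun b => Sum.inr (Quot.mk _ b))) ?_
      invFun := Sum.elim (Quot.lift (fun a => Quot.mk _ (Sum.inl a)) ?_)
        (Quot.lift (fun b => Quot.mk _ (Sum.inr b)) ?_)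
      left_inv := ?_
      right_inv := ?_ }
  · rintro (a | b) _ rfl
    · exact congrArg Sum.inl (Quot.sound rfl)
    · exact congrArg Sum.inr (Quot.sound rfl)
  · rintro a _ rfl
    exact Quot.sound rfl
  · rintro a _ rfl
    exact Quot.sound rfl
  · rintro ⟨a | b⟩ <;> rfl
  · rintro (a | b)
    · induction a using Quot.ind with
      | mk a => rfl
    · induction b using Quot.ind with
      | mk b => rfl

lemma cyc_rot (n : ℕ) (hn : 0 < n) : cycles (rot n) = 1 := by
  haveI : NeZero (2 * n) := ⟨by omega⟩
  unfold cycles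
  rw [Nat.card_eq_one_iff_unique]
  have h0 : ∀ k : ℕ, Quot.mk (fun i j => rot n i = j) (k : ZMod (2 * n)) = Quot.mk _ 0 := by
    intro k
    induction k with
    | zero => simp
    | succ k ih =>
      rw [← ih]
      exact (Quot.sound (by simp [rot])).symm
  have h1 : ∀ q : Quot (fun i j => rot n i = j), q = Quot.mk _ 0 := by
    rintro ⟨i⟩
    have := h0 i.val
    rwa [ZMod.natCast_zmod_val] at this
  exact ⟨⟨fun a b => (h1 a).trans (h1 b).symm⟩, ⟨Quot.mk _ 0⟩⟩

/-- the rotation as a permutation -/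
def rotPerm (n : ℕ) : Equiv.Perm (ZMod (2 * n)) := Equiv.addRight 1

lemma genus_ok (n : ℕ) (hn : 0 < n) [NeZero (2 * n)] (σ : ZMod (2 * n) → ZMod (2 * n))
    (hσ : Function.Involutive σ) (hfp : ∀ i, σ i ≠ i) (A : Finset (ZMod (2 * n)))
    (hA : ∀ i ∈ A, σ i ∈ A) :
    ∃ g, n + 2 = cycles (rot n ∘ restrictTo σ A) +
      cycles (rot n ∘ restrictTo σ (A : Set (ZMod (2 * n)))ᶜ) + 2 * g := by
  obtain ⟨k, h1, h2, h3⟩ := cyc_bound (rotPerm n) hσ hfp _ A rfl hA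
  obtain ⟨l, h4, h5, h6⟩ := cyc_bound (rotPerm n) hσ hfp _ Aᶜ rfl (by
    intro i hi
    rw [Finset.mem_compl] at hi ⊢
    intro h
    apply hi
    have := hA _ h
    rwa [hσ] at this)
  have hr : (rotPerm n : ZMod (2 * n) → ZMod (2 * n)) = rot n := rfl
  rw [hr, cyc_rot n hn] at h2 h3 h5 h6
  rw [Finset.coe_compl] at h5 h6
  have hc := Finset.card_add_card_compl A
  rw [ZMod.card] at hc
  refine ⟨(n + 2 - cycles (rot n ∘ restrictTo σ A) -
      cycles (rot n ∘ restrictTo σ (A : Set (ZMod (2 * n)))ᶜ)) / 2, ?_⟩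
  omega

lemma exists_block_equiv (n₁ n₂ : ℕ) [NeZero (2 * n₁)] [NeZero (2 * n₂)]
    [NeZero (2 * (n₁ + n₂))] :
    ∃ e : ZMod (2 * n₁) ⊕ ZMod (2 * n₂) ≃ ZMod (2 * (n₁ + n₂)),
      (∀ i, (e (Sum.inl i)).val = i.val) ∧ (∀ j, (e (Sum.inr j)).val = 2 * n₁ + j.val) := by
  let F : ZMod (2 * n₁) ⊕ ZMod (2 * n₂) → ZMod (2 * (n₁ + n₂)) :=
    Sum.elim (fun i => (i.val : ZMod (2 * (n₁ + n₂))))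
      (fun j => ((2 * n₁ + j.val : ℕ) : ZMod (2 * (n₁ + n₂))))
  have hl : ∀ i, (F (Sum.inl i)).val = i.val := fun i =>
    ZMod.val_cast_of_lt (by have := ZMod.val_lt i; omega)
  have hr : ∀ i, (F (Sum.inr i)).val = 2 * n₁ + i.val := fun i =>
    ZMod.val_cast_of_lt (by have := ZMod.val_lt i; omega)
  have hinj : Function.Injective F := by
    rintro (a | a) (b | b) h <;> have h' := congrArg ZMod.val h <;> simp only [hl, hr] at h'
    · rw [ZMod.val_injective _ h']
    · have := ZMod.val_lt a; omega
    · have := ZMod.val_lt b; omega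
    · rw [ZMod.val_injective _ (Nat.add_left_cancel h')]
  have hbij : Function.Bijective F := by
    rw [Fintype.bijective_iff_injective_and_card]
    refine ⟨hinj, ?_⟩
    rw [Fintype.card_sum, ZMod.card, ZMod.card, ZMod.card]; ring
  exact ⟨Equiv.ofBijective F hbij, hl, hr⟩

lemma val_rot (n : ℕ) [NeZero (2 * n)] (i : ZMod (2 * n)) :
    (rot n i).val = if i.val + 1 = 2 * n then 0 else i.val + 1 := by
  have h := ZMod.val_lt i
  have h2 : rot n i = ((i.val + 1 : ℕ) : ZMod (2 * n)) := by simp [rot]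
  rw [h2, ZMod.val_natCast]
  split_ifs with h3
  · rw [h3, Nat.mod_self]
  · exact Nat.mod_eq_of_lt (by omega)

lemma rot_block (n₁ n₂ : ℕ) [NeZero (2 * n₁)] [NeZero (2 * n₂)] [NeZero (2 * (n₁ + n₂))]
    (e : ZMod (2 * n₁) ⊕ ZMod (2 * n₂) ≃ ZMod (2 * (n₁ + n₂)))
    (hl : ∀ i, (e (Sum.inl i)).val = i.val) (hr : ∀ j, (e (Sum.inr j)).val = 2 * n₁ + j.val)
    (s : ZMod (2 * n₁) ⊕ ZMod (2 * n₂)) :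
    e (Equiv.swap (Sum.inl 0) (Sum.inr 0) (Sum.map (rot n₁) (rot n₂) s)) = rot (n₁ + n₂) (e s) := by
  apply ZMod.val_injective
  rw [val_rot]
  have hz1 : 2 * n₁ ≠ 0 := NeZero.ne _
  have hz2 : 2 * n₂ ≠ 0 := NeZero.ne _
  rcases s with i | i
  · have hi := ZMod.val_lt i
    have hv := val_rot n₁ i
    rw [Sum.map_inl, hl]
    by_cases h : i.val + 1 = 2 * n₁
    · rw [if_pos h, ZMod.val_eq_zero] at hv
      rw [hv, Equiv.swap_apply_left, hr, ZMod.val_zero, if_neg (by omega)]; omega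
    · rw [if_neg h] at hv
      rw [Equiv.swap_apply_of_ne_of_ne, hl, hv, if_neg (by omega)]
      · intro h'
        rw [Sum.inl.injEq] at h'
        rw [h', ZMod.val_zero] at hv; omega
      · simp
  · have hi := ZMod.val_lt i
    have hv := val_rot n₂ i
    rw [Sum.map_inr, hr]
    by_cases h : i.val + 1 = 2 * n₂
    · rw [if_pos h, ZMod.val_eq_zero] at hv
      rw [hv, Equiv.swap_apply_right, hl, ZMod.val_zero, if_pos (by omega)]
    · rw [if_neg h] at hv
      rw [Equiv.swap_apply_of_ne_of_ne, hr, hv, if_neg (by omega)]; omega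
      · simp
      · intro h'
        rw [Sum.inr.injEq] at h'
        rw [h', ZMod.val_zero] at hv; omega

lemma cyc_block (n₁ n₂ : ℕ) [NeZero (2 * n₁)] [NeZero (2 * n₂)] [NeZero (2 * (n₁ + n₂))]
    (e : ZMod (2 * n₁) ⊕ ZMod (2 * n₂) ≃ ZMod (2 * (n₁ + n₂)))
    (hl : ∀ i, (e (Sum.inl i)).val = i.val) (hr : ∀ j, (e (Sum.inr j)).val = 2 * n₁ + j.val)
    {σ₁ : ZMod (2 * n₁) → ZMod (2 * n₁)} {σ₂ : ZMod (2 * n₂) → ZMod (2 * n₂)}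
    {σ : ZMod (2 * (n₁ + n₂)) → ZMod (2 * (n₁ + n₂))}
    (hσ₁ : Function.Involutive σ₁) (hσ₂ : Function.Involutive σ₂)
    (hσ : ∀ s, σ (e s) = e (Sum.map σ₁ σ₂ s))
    (A : Set (ZMod (2 * n₁))) (B : Set (ZMod (2 * n₂))) (C : Set (ZMod (2 * (n₁ + n₂))))
    (hA : ∀ i ∈ A, σ₁ i ∈ A) (hB : ∀ i ∈ B, σ₂ i ∈ B)
    (hCA : ∀ i, e (Sum.inl i) ∈ C ↔ i ∈ A) (hCB : ∀ i, e (Sum.inr i) ∈ C ↔ i ∈ B) :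
    cycles (rot n₁ ∘ restrictTo σ₁ A) + cycles (rot n₂ ∘ restrictTo σ₂ B) =
      cycles (rot (n₁ + n₂) ∘ restrictTo σ C) + 1 := by
  classical
  set p₁ : Equiv.Perm (ZMod (2 * n₁)) := rotPerm n₁ * (restrictTo_involutive hσ₁ hA).toPerm
  set p₂ : Equiv.Perm (ZMod (2 * n₂)) := rotPerm n₂ * (restrictTo_involutive hσ₂ hB).toPerm
  let p : Equiv.Perm (ZMod (2 * n₁) ⊕ ZMod (2 * n₂)) := Equiv.sumCongr p₁ p₂
  have hp : (p : _ → _) = Sum.map (rot n₁ ∘ restrictTo σ₁ A) (rot n₂ ∘ restrictTo σ₂ B) := by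
    funext s; rcases s with s | s <;> rfl
  rw [← cyc_sum, ← hp, cyc_swap_join p (Sum.inl 0) (Sum.inr 0)]
  · congr 1
    apply cyc_congr e
    intro s
    rw [Equiv.Perm.mul_apply, hp, ← Sum.map_map, rot_block n₁ n₂ e hl hr, Function.comp_apply]
    congr 1
    rcases s with s | s
    · simp only [Sum.map_inl, restrictTo, hCA, hσ]
      split_ifs <;> rfl
    · simp only [Sum.map_inr, restrictTo, hCB, hσ]
      split_ifs <;> rfl
  · rw [← cyc_mk_eq_iff]
    intro h
    have := congrArg (Quot.lift (fun s => Sum.isLeft s) (by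
      rintro (a | a) _ rfl <;> rfl)) h
    simp at this

/-- The partial-dual genus polynomial is multiplicative under connected sum of
chord diagrams: if the first `2n₁` points of `σ` are paired according to `σ₁` and
the last `2n₂` points according to `σ₂` (shifted by `2n₁`), with no chord joining
the two blocks, then `∂Γ_σ = ∂Γ_{σ₁} · ∂Γ_{σ₂}`. -/
theorem pdPoly_connected_sum (n₁ n₂ : ℕ) (hn₁ : 0 < n₁) (hn₂ : 0 < n₂)
    (σ₁ : ZMod (2 * n₁) → ZMod (2 * n₁)) (σ₂ : ZMod (2 * n₂) → ZMod (2 * n₂))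
    (hinv₁ : Function.Involutive σ₁) (hfpf₁ : ∀ i, σ₁ i ≠ i)
    (hinv₂ : Function.Involutive σ₂) (hfpf₂ : ∀ i, σ₂ i ≠ i)
    (σ : ZMod (2 * (n₁ + n₂)) → ZMod (2 * (n₁ + n₂)))
    (hlo : ∀ i : ZMod (2 * (n₁ + n₂)), i.val < 2 * n₁ →
      (σ i).val = (σ₁ ((i.val : ℕ) : ZMod (2 * n₁))).val)
    (hhi : ∀ i : ZMod (2 * (n₁ + n₂)), 2 * n₁ ≤ i.val →
      (σ i).val = 2 * n₁ + (σ₂ (((i.val - 2 * n₁ : ℕ)) : ZMod (2 * n₂))).val) :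
    pdPoly (n₁ + n₂) σ = pdPoly n₁ σ₁ * pdPoly n₂ σ₂ := by
  have i1 : NeZero (2 * n₁) := ⟨by omega⟩
  have i2 : NeZero (2 * n₂) := ⟨by omega⟩
  have i3 : NeZero (2 * (n₁ + n₂)) := ⟨by omega⟩
  obtain ⟨e, hl, hr⟩ := exists_block_equiv n₁ n₂
  have hσ : ∀ s, σ (e s) = e (Sum.map σ₁ σ₂ s) := by
    rintro (s | s) <;> apply ZMod.val_injective
    · rw [hlo _ (by rw [hl]; exact ZMod.val_lt s), hl, Sum.map_inl, hl, ZMod.natCast_zmod_val]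
    · rw [hhi _ (by rw [hr]; omega), hr, Sum.map_inr, hr, Nat.add_sub_cancel_left,
        ZMod.natCast_zmod_val]
  unfold pdPoly
  rw [dif_neg (by omega), dif_neg (by omega), dif_neg (by omega)]
  rw [Finset.sum_mul_sum, ← Finset.sum_product']
  symm
  have hmem : ∀ (A : Finset (ZMod (2 * n₁))) (B : Finset (ZMod (2 * n₂))) (s),
      e s ∈ (A.disjSum B).map e.toEmbedding ↔ s ∈ A.disjSum B := by
    intro A B s
    rw [Finset.mem_map_equiv, Equiv.symm_apply_apply]
  refine Finset.sum_equiv (Finset.sumEquiv.symm.toEquiv.trans e.finsetCongr) ?_ ?_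
  · rintro ⟨A, B⟩
    simp only [Finset.mem_product, Finset.mem_filter, Finset.mem_univ, true_and]
    change _ ↔ ∀ i ∈ (A.disjSum B).map e.toEmbedding, σ i ∈ (A.disjSum B).map e.toEmbedding
    rw [e.surjective.forall]
    simp only [hσ, hmem]
    simp
  · rintro ⟨A, B⟩ hAB
    simp only [Finset.mem_product, Finset.mem_filter, Finset.mem_univ, true_and] at hAB
    obtain ⟨hA, hB⟩ := hAB
    change _ = Polynomial.X ^ pdGenus (n₁ + n₂) σ
      (((A.disjSum B).map e.toEmbedding : Finset _) : Set (ZMod (2 * (n₁ + n₂))))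
    change Polynomial.X ^ pdGenus n₁ σ₁ A * Polynomial.X ^ pdGenus n₂ σ₂ B = _
    rw [← pow_add]
    congr 1
    obtain ⟨g₁, h₁⟩ := genus_ok n₁ hn₁ σ₁ hinv₁ hfpf₁ A hA
    obtain ⟨g₂, h₂⟩ := genus_ok n₂ hn₂ σ₂ hinv₂ hfpf₂ B hB
    have c1 := cyc_block n₁ n₂ e hl hr hinv₁ hinv₂ hσ A B
      (((A.disjSum B).map e.toEmbedding : Finset _) : Set (ZMod (2 * (n₁ + n₂)))) hA hB
      (fun i => by rw [Finset.mem_coe, hmem]; simp) (fun i => by rw [Finset.mem_coe, hmem]; simp)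
    have c2 := cyc_block n₁ n₂ e hl hr hinv₁ hinv₂ hσ (A : Set (ZMod (2 * n₁)))ᶜ
      (B : Set (ZMod (2 * n₂)))ᶜ
      (((A.disjSum B).map e.toEmbedding : Finset _) : Set (ZMod (2 * (n₁ + n₂))))ᶜ
      (fun i hi h => hi (by have := hA _ h; rwa [hinv₁] at this))
      (fun i hi h => hi (by have := hB _ h; rwa [hinv₂] at this))
      (fun i => by rw [Set.mem_compl_iff, Finset.mem_coe, hmem]; simp)
      (fun i => by rw [Set.mem_compl_iff, Finset.mem_coe, hmem]; simp)
    unfold pdGenus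
    omega
end

section
/- For every chord diagram σ of order n and every set A of its chords, c(r ∘ σ_A) + c(r ∘ σ_{A^c}) ≡ n (mod 2). In particular n + 2 − c(r ∘ σ_A) − c(r ∘ σ_{A^c}) is even, so the genus g_A(σ) of the partial dual of σ relative to A is an integer. -/
open Equiv Equiv.Perm in
theorem sameCycle_quot {α : Type*} (f : Perm α) (x y : α) (h : f.SameCycle x y) :
    Quot.mk (fun i j => f i = j) x = Quot.mk (fun i j => f i = j) y := by
  have key : ∀ (k : ℕ) (z : α), Quot.mk (fun i j => f i = j) z =
      Quot.mk (fun i j => f i = j) ((f ^ k) z) := by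
    intro k
    induction k with
    | zero => intro z; simp
    | succ k ih =>
      intro z
      rw [ih z]
      refine Quot.sound ?_
      rw [pow_succ', Perm.mul_apply]
  obtain ⟨i, hi⟩ := h
  rcases Int.eq_nat_or_neg i with ⟨k, rfl | rfl⟩
  · rw [zpow_natCast] at hi
    rw [← hi]; exact key k x
  · rw [zpow_neg, zpow_natCast, Perm.inv_eq_iff_eq] at hi
    rw [hi]; exact (key k y).symm

open Equiv Equiv.Perm in
theorem cycles_perm {α : Type*} [Fintype α] [DecidableEq α] (f : Perm α) :
    cycles f + f.support.card = Multiset.card f.cycleType + Fintype.card α := by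
  let F : α → Perm α ⊕ α := fun x => if f x = x then Sum.inr x else Sum.inl (f.cycleOf x)
  have hF : ∀ x y, f x = y → F x = F y := by
    rintro x y rfl
    by_cases h : f x = x
    · rw [h]
    · have h' : ¬ f (f x) = f x := fun h2 => h (f.injective h2)
      simp only [F, h, h', if_false]
      rw [SameCycle.cycleOf_eq (sameCycle_apply_right.2 (SameCycle.refl f x))]
  let G : Quot (fun i j => f i = j) → Perm α ⊕ α := Quot.lift F hF
  have hG : Function.Injective G := by
    intro a b
    induction a using Quot.ind with | _ x
    induction b using Quot.ind with | _ y
    intro h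
    change F x = F y at h
    by_cases hx : f x = x <;> by_cases hy : f y = y <;> simp only [F, hx, hy, if_true, if_false] at h
    · rw [Sum.inr.inj h]
    · cases h
    · cases h
    · have h := Sum.inl.inj h
      apply sameCycle_quot
      by_contra hc
      have h1 : f.cycleOf x x = f.cycleOf y x := by rw [h]
      rw [cycleOf_apply_self, cycleOf_apply_of_not_sameCycle (fun h => hc h.symm)] at h1
      exact hx h1
  have hr : Set.range G = ↑(f.cycleFactorsFinset.disjSum (f.supportᶜ)) := by
    ext z
    simp only [Set.mem_range, Finset.mem_coe]
    constructor
    · rintro ⟨a, rfl⟩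
      induction a using Quot.ind with | _ x
      change F x ∈ _
      by_cases hx : f x = x
      · simp [F, hx]
      · simp [F, hx, cycleOf_mem_cycleFactorsFinset_iff]
    · intro hz
      rcases z with g | x
      · rw [Finset.inl_mem_disjSum] at hz
        obtain ⟨x, hx⟩ := (mem_cycleFactorsFinset_iff.1 hz).1.nonempty_support
        refine ⟨Quot.mk _ x, ?_⟩
        change F x = _
        have h1 := cycle_is_cycleOf hx hz
        have h2 : f x ≠ x := mem_support.1 (mem_cycleFactorsFinset_support_le hz hx)
        simp [F, h2, h1]
      · rw [Finset.inr_mem_disjSum] at hz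
        refine ⟨Quot.mk _ x, ?_⟩
        change F x = _
        have : f x = x := by simpa using hz
        simp [F, this]
  have hc : cycles f = f.cycleFactorsFinset.card + (f.supportᶜ).card := by
    unfold cycles
    rw [← Nat.card_range_of_injective hG, hr]
    simp only [Finset.coe_sort_coe, Nat.card_eq_fintype_card, Fintype.card_coe, Finset.card_disjSum]
  rw [hc, cycleType_def, Finset.card_compl]
  have := Finset.card_le_univ f.support
  simp only [Multiset.card_map, Finset.card_val]
  omega

open Equiv Equiv.Perm in
theorem sign_cycles {α : Type*} [Fintype α] [DecidableEq α] (f : Perm α) :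
    sign f = (-1) ^ (cycles f + Fintype.card α) := by
  have h := cycles_perm f
  rw [sign_of_cycleType, sum_cycleType, neg_one_pow_congr]
  grind

/-- For every chord diagram `σ` of order `n` and every set `A` of its chords,
`c(r ∘ σ_A) + c(r ∘ σ_{Aᶜ}) ≡ n (mod 2)`; in particular the genus `g_A(σ)` of the
partial dual of `σ` relative to `A` is an integer. -/
theorem partial_dual_cycles_parity (n : ℕ) (hn : 0 < n)
    (σ : ZMod (2 * n) → ZMod (2 * n))
    (hinv : Function.Involutive σ) (hfpf : ∀ i, σ i ≠ i)
    (A : Set (ZMod (2 * n))) (hA : ∀ i ∈ A, σ i ∈ A) :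
    cycles (rot n ∘ restrictTo σ A) + cycles (rot n ∘ restrictTo σ Aᶜ) ≡ n [MOD 2] := by
  classical
  have : NeZero (2 * n) := ⟨by omega⟩
  have hA' : ∀ i ∈ Aᶜ, σ i ∈ Aᶜ := fun i hi h => hi (by simpa [hinv i] using hA _ h)
  have hB : ∀ B : Set (ZMod (2 * n)), (∀ i ∈ B, σ i ∈ B) →
      Function.Involutive (restrictTo σ B) := by
    intro B hB i
    by_cases h : i ∈ B
    · simp [restrictTo, h, hB i h, hinv i]
    · simp [restrictTo, h]
  let r : Equiv.Perm (ZMod (2 * n)) := Equiv.addRight 1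
  let s : Equiv.Perm (ZMod (2 * n)) := hinv.toPerm
  let a : Equiv.Perm (ZMod (2 * n)) := (hB A hA).toPerm
  let b : Equiv.Perm (ZMod (2 * n)) := (hB Aᶜ hA').toPerm
  have hab : a * b = s := by
    ext i
    change restrictTo σ A (restrictTo σ Aᶜ i) = σ i
    by_cases h : i ∈ A
    · simp [restrictTo, h]
    · have := hA' i h
      simp only [Set.mem_compl_iff] at this
      simp [restrictTo, h, this]
  have h1 : rot n ∘ restrictTo σ A = ⇑(r * a) := rfl
  have h2 : rot n ∘ restrictTo σ Aᶜ = ⇑(r * b) := rfl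
  have hs : Equiv.Perm.sign s = (-1) ^ n := by
    have hsup : s.support = Finset.univ := by
      ext i
      simp only [Equiv.Perm.mem_support, Finset.mem_univ, iff_true]
      exact hfpf i
    have hsum := s.sum_cycleType
    rw [hsup, Finset.card_univ, ZMod.card] at hsum
    have hs2 : s ^ 2 = 1 := by
      rw [pow_two]
      exact Equiv.ext hinv
    have hrep : s.cycleType = Multiset.replicate (Multiset.card s.cycleType) 2 := by
      refine Multiset.eq_replicate_card.2 fun k hk => ?_
      have hk1 := Equiv.Perm.two_le_of_mem_cycleType hk
      have hk2 := (Equiv.Perm.dvd_of_mem_cycleType hk).trans (orderOf_dvd_of_pow_eq_one hs2)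
      have := Nat.le_of_dvd (by norm_num) hk2
      omega
    have hcard : Multiset.card s.cycleType = n := by
      rw [hrep, Multiset.sum_replicate, smul_eq_mul] at hsum
      omega
    rw [Equiv.Perm.sign_of_cycleType, hsum, hcard, pow_add, pow_mul]
    simp
  have key : Equiv.Perm.sign (r * a) * Equiv.Perm.sign (r * b) = (-1) ^ n := by
    rw [← hs, ← hab]
    simp only [Equiv.Perm.sign_mul]
    rw [mul_mul_mul_comm, Int.units_mul_self, one_mul]
  rw [h1, h2]
  rw [sign_cycles, sign_cycles, ← pow_add, ZMod.card] at key
  generalize cycles ⇑(r * a) = p at *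
  generalize cycles ⇑(r * b) = q at *
  have hne : (-1 : ℤˣ) ≠ 1 := by decide
  unfold Nat.ModEq
  rcases Nat.even_or_odd (p + 2 * n + (q + 2 * n)) with hp | hp <;>
    rcases Nat.even_or_odd n with hq | hq <;>
    rw [hp.neg_one_pow, hq.neg_one_pow] at key
  · rw [Nat.even_iff] at hp hq
    omega
  · exact absurd key.symm hne
  · exact absurd key hne
  · rw [Nat.odd_iff] at hp hq
    omega
end

section
/- For every chord diagram σ of order n and every set A of its chords, c(r ∘ σ_A) + c(r ∘ σ_{A^c}) ≤ n + 2. Equivalently, the genus g_A(σ) of the partial dual of σ relative to A is nonnegative. -/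
open Module in
lemma pd_finrank_anti {α : Type*} [Fintype α] (σ : α → α) (s : α → ℚ)
    (hs : ∀ i, s (σ i) = - s i) (hs0 : ∀ i, s i ≠ 0) (W : Submodule ℚ (α → ℚ))
    (hW : ∀ f ∈ W, ∀ i, f (σ i) = - f i) :
    2 * finrank ℚ W ≤ Fintype.card α := by
  let M : (α → ℚ) →ₗ[ℚ] (α → ℚ) :=
    { toFun := fun f i => s i * f i
      map_add' := by intro f g; ext i; simp [mul_add]
      map_smul' := by intro c f; ext i; simp; ring }
  have hM : Function.Injective M := by
    intro f g h
    ext i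
    have := congrFun h i
    exact mul_left_cancel₀ (hs0 i) this
  have h1 : finrank ℚ (W.map M) = finrank ℚ W :=
    (Submodule.equivMapOfInjective M hM W).finrank_eq.symm
  have hd : Disjoint W (W.map M) := by
    rw [Submodule.disjoint_def]
    rintro x hx ⟨y, hy, rfl⟩
    ext i
    have e1 := hW _ hx i
    have e2 := hW _ hy i
    change s (σ i) * y (σ i) = - (s i * y i) at e1
    rw [e2, hs] at e1
    change s i * y i = 0
    linarith
  have h2 := Submodule.finrank_add_finrank_le_of_disjoint hd
  rw [h1, finrank_fintype_fun_eq_card] at h2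
  omega

/-- antisymmetrised pullback of a function on the cycles of `p` -/
def pdMap {α : Type*} (σ p : α → α) :
    ((Quot fun i j => p i = j) → ℚ) →ₗ[ℚ] (α → ℚ) where
  toFun f i := f (Quot.mk _ i) - f (Quot.mk _ (σ i))
  map_add' := by intro f g; ext i; simp; ring
  map_smul' := by intro c f; ext i; simp; ring

open Module in
lemma pd_rank {α : Type*} [Fintype α] (σ p : α → α)
    (htr : ∀ f : α → ℚ, (∀ i, f (p i) = f i) → (∀ i, f (σ i) = f i) → ∃ c, ∀ i, f i = c) :
    cycles p ≤ finrank ℚ (LinearMap.range (pdMap σ p)) + 1 := by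
  classical
  have : Finite (Quot fun i j => p i = j) := Finite.of_surjective _ Quot.mk_surjective
  have := Fintype.ofFinite (Quot fun i j => p i = j)
  have h := LinearMap.finrank_range_add_finrank_ker (pdMap σ p)
  rw [finrank_fintype_fun_eq_card, ← Nat.card_eq_fintype_card] at h
  have hk : finrank ℚ (LinearMap.ker (pdMap σ p)) ≤ 1 := by
    have hle : LinearMap.ker (pdMap σ p) ≤
        Submodule.span ℚ {(fun _ => 1 : (Quot fun i j => p i = j) → ℚ)} := by
      intro f hf
      rw [LinearMap.mem_ker] at hf
      obtain ⟨c, hc⟩ := htr (fun i => f (Quot.mk _ i))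
        (fun i => congrArg f (Quot.sound (r := fun i j => p i = j) rfl).symm)
        (fun i => by
          have : f (Quot.mk _ i) - f (Quot.mk _ (σ i)) = 0 := congrFun hf i
          linarith)
      rw [Submodule.mem_span_singleton]
      refine ⟨c, ?_⟩
      ext x
      obtain ⟨i, rfl⟩ := Quot.exists_rep x
      simp [hc i]
    exact (Submodule.finrank_mono hle).trans ((finrank_span_le_card _).trans (by simp))
  unfold cycles
  omega

open Module in
lemma pd_main {α : Type*} [Fintype α] (σ p q : α → α) (hσ : Function.Involutive σ)
    (s : α → ℚ) (hs : ∀ i, s (σ i) = - s i) (hs0 : ∀ i, s i ≠ 0)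
    (hp : Function.Bijective p) (hq : ∀ i, q (σ i) = p i)
    (htr : ∀ f : α → ℚ, (∀ i, f (p i) = f i) → (∀ i, f (σ i) = f i) → ∃ c, ∀ i, f i = c) :
    2 * (cycles p + cycles q) ≤ Fintype.card α + 4 := by
  have h1 := pd_rank σ p htr
  have h2 := pd_rank σ q (fun f hf hfσ => htr f (fun i => by rw [← hq, hf, hfσ]) hfσ)
  set X := LinearMap.range (pdMap σ p)
  set Y := LinearMap.range (pdMap σ q)
  have hX : ∀ f ∈ X, ∀ i, f (σ i) = - f i := by
    rintro _ ⟨f, rfl⟩ i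
    simp [pdMap, hσ i]
  have hY : ∀ f ∈ Y, ∀ i, f (σ i) = - f i := by
    rintro _ ⟨f, rfl⟩ i
    simp [pdMap, hσ i]
  have hW := pd_finrank_anti σ s hs hs0 (X ⊔ Y) (by
    intro f hf i
    obtain ⟨x, hx, y, hy, rfl⟩ := Submodule.mem_sup.1 hf
    simp only [Pi.add_apply, hX x hx, hY y hy]
    ring)
  have horth : ∀ x ∈ X, ∀ y ∈ Y, ∑ i, x i * y i = 0 := by
    rintro _ ⟨f, rfl⟩ _ ⟨g, rfl⟩
    change ∑ i, (f (Quot.mk _ i) - f (Quot.mk _ (σ i))) *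
      (g (Quot.mk _ i) - g (Quot.mk _ (σ i))) = 0
    set F : α → ℚ := fun i => f (Quot.mk _ i)
    set G : α → ℚ := fun i => g (Quot.mk _ i)
    have hF : ∀ i, F (p i) = F i := fun i => congrArg f (Quot.sound (r := fun i j => p i = j) rfl).symm
    have hG : ∀ i, G (p i) = G (σ i) := fun i => by
      rw [← hq]; exact congrArg g (Quot.sound (r := fun i j => q i = j) rfl).symm
    change ∑ i, (F i - F (σ i)) * (G i - G (σ i)) = 0
    have e1 : ∑ i, F i * G (σ i) = ∑ i, F i * G i := by
      rw [← hp.sum_comp (fun i => F i * G i)]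
      exact Finset.sum_congr rfl fun i _ => by rw [hF, hG]
    have e2 : ∑ i, F (σ i) * G i = ∑ i, F i * G (σ i) := by
      rw [← hσ.bijective.sum_comp (fun i => F i * G (σ i))]
      exact Finset.sum_congr rfl fun i _ => by rw [hσ i]
    have e3 : ∑ i, F (σ i) * G (σ i) = ∑ i, F i * G i :=
      hσ.bijective.sum_comp (fun i => F i * G i)
    have : ∀ i, (F i - F (σ i)) * (G i - G (σ i)) =
      F i * G i - F i * G (σ i) - F (σ i) * G i + F (σ i) * G (σ i) := fun i => by ring
    simp only [this, Finset.sum_add_distrib, Finset.sum_sub_distrib, e3, e2, e1]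
    ring
  have hd : Disjoint X Y := by
    rw [Submodule.disjoint_def]
    intro x hx hy
    have h0 := horth x hx x hy
    rw [Finset.sum_eq_zero_iff_of_nonneg (fun i _ => mul_self_nonneg _)] at h0
    ext i
    exact mul_self_eq_zero.1 (h0 i (Finset.mem_univ i))
  have h3 := Submodule.finrank_sup_add_finrank_inf_eq X Y
  rw [hd.eq_bot, finrank_bot] at h3
  omega


/-- For every chord diagram `σ` of order `n` and every set `A` of its chords,
`c(r ∘ σ_A) + c(r ∘ σ_{Aᶜ}) ≤ n + 2`; equivalently the genus `g_A(σ)` of the partial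
dual of `σ` relative to `A` is nonnegative. -/
theorem partial_dual_cycles_le (n : ℕ) (hn : 0 < n)
    (σ : ZMod (2 * n) → ZMod (2 * n))
    (hinv : Function.Involutive σ) (hfpf : ∀ i, σ i ≠ i)
    (A : Set (ZMod (2 * n))) (hA : ∀ i ∈ A, σ i ∈ A) :
    cycles (rot n ∘ restrictTo σ A) + cycles (rot n ∘ restrictTo σ Aᶜ) ≤ n + 2 := by

  have : NeZero (2 * n) := ⟨by omega⟩
  have hA' : ∀ i, σ i ∈ A ↔ i ∈ A := fun i =>
    ⟨fun h => by simpa [hinv i] using hA _ h, hA i⟩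
  have hrA : Function.Involutive (restrictTo σ A) := by
    intro i
    by_cases h : i ∈ A <;> simp [restrictTo, h, hA', hinv i]
  have hp : Function.Bijective (rot n ∘ restrictTo σ A) :=
    (Equiv.addRight (1 : ZMod (2 * n))).bijective.comp hrA.bijective
  have key := pd_main σ (rot n ∘ restrictTo σ A) (rot n ∘ restrictTo σ Aᶜ) hinv
    (fun i => if i.val < (σ i).val then 1 else -1)
    (by
      intro i
      have hne : i.val ≠ (σ i).val := fun h => hfpf i (ZMod.val_injective _ h).symm
      simp only [hinv i]
      rcases lt_or_gt_of_ne hne with h | h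
      · simp [h, h.le]
      · simp [h, not_lt.2 h.le])
    (by intro i; split_ifs <;> norm_num)
    hp
    (by
      intro i
      by_cases h : i ∈ A <;> simp [restrictTo, h, hA', hinv i])
    (by
      intro f hf hσ
      have hstep : ∀ i, f (i + 1) = f i := by
        intro i
        by_cases h : i ∈ A
        · have := hf (σ i)
          simpa [restrictTo, rot, h, hA', hinv i, hσ] using this
        · have := hf i
          simpa [restrictTo, rot, h] using this
      have hnat : ∀ k : ℕ, f (k : ZMod (2 * n)) = f 0 := by
        intro k
        induction k with
        | zero => simp
        | succ k ih => rw [Nat.cast_succ, hstep, ih]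
      exact ⟨f 0, fun i => by rw [← hnat i.val, ZMod.natCast_zmod_val]⟩)
  rw [ZMod.card] at key
  omega
end
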